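/- Let L > 0, let φ ∈ C²([0,1]) satisfy φ′(α) ≤ −c < 0 for some constant c > 0 and φ(0) − φ(1) ≤ L, and let φ̃ ∈ C¹([0,1]). Define E⁰_φ(g) := ∫₀¹ ∫₀¹ ln|sin(π(g(α)−g(β))/L)| dα dβ. Then ε ↦ E⁰_φ(φ + ε φ̃) is differentiable at ε = 0, for every α ∈ (0,1) the principal-value limit lim_{δ→0⁺} ( ∫₀^{α−δ} + ∫_{α+δ}¹ ) (2π/L) · cot(π(φ(α)−φ(β))/L) dβ exists, and (d/dε)|_{ε=0} E⁰_φ(φ + ε φ̃) = ∫₀¹ [ lim_{δ→0⁺} ( ∫₀^{α−δ} + ∫_{α+δ}¹ ) (2π/L) · cot(π(φ(α)−φ(β))/L) dβ ] · φ̃(α) dα. -/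

import Mathlib

open Real Filter Topology MeasureTheory

/-- The step-location interaction energy
`E⁰_φ(g) := ∫₀¹ ∫₀¹ ln|sin(π(g(α)−g(β))/L)| dα dβ`. -/
noncomputable def E0phi (L : ℝ) (g : ℝ → ℝ) : ℝ :=
  ∫ β in (0:ℝ)..1, ∫ α in (0:ℝ)..1, Real.log |Real.sin (π * (g α - g β) / L)|

/-!
After rescaling by `π / L`, let `f` be the profile, `f'` its derivative and `g` the perturbation.
Formally the derivative of the energy is `∬ cot (f x - f y) * (g x - g y)`, and since `cot` is odd,
symmetry turns it into `2 ∫ (PV ∫ cot (f x - f y) dy) * g x dx`.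

The delicate case of the differentiation is a total drop of exactly `π`: then `sin (f x - f y)` also
vanishes at the corners `(0, 1)` and `(1, 0)`, and these zeros move with `ε`. Two facts handle it:
`|log a - log b| ≤ |a - b| / √|a b|`, and the steepness of `f`, which makes `|sin|^(-1/2)`
integrable in `x` uniformly in `y` and `ε`. The inner integral is therefore Lipschitz at `ε = 0`
with constant `O(1 / √(y (1 - y)))`, and differentiation under the integral sign applies first in
`x` and then in `y`.

For the symmetrisation, `cot` is replaced by the bounded odd kernel `sin * cos / (sin² + η)`. In
`f' x * cot (f x - f y) = (f' x - f' y) * cot (f x - f y) + f' y * cot (f x - f y)`, the first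
summand is dominated and the second has a logarithm as primitive in `y`. This identity yields the
principal value, and, for the regularised kernel, bounds uniform in `η` that allow `η → 0`.
-/

section

open Set
open scoped NNReal

lemma aemeasurable_restrict_Ioo {F : ℝ → ℝ} {a b : ℝ} (hF : ContinuousOn F (Icc a b)) :
    AEMeasurable F (volume.restrict (Ioo a b)) :=
  (hF.mono Ioo_subset_Icc_self).aemeasurable measurableSet_Ioo

lemma ae_restrict_ne (s : Set ℝ) (a : ℝ) : ∀ᵐ x ∂volume.restrict s, x ≠ a :=
  ae_restrict_of_ae (Measure.ae_ne volume a)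

section InverseSquareRoot

variable {a k x y : ℝ}

/-- The even function `1 / √|x|`, the prototype of an integrable singularity. It takes the value `0`
at `0`, so that `invSqrt (sin u) = 0` where `sin u = 0`. -/
noncomputable def invSqrt (x : ℝ) : ℝ := (√|x|)⁻¹

lemma invSqrt_nonneg (x : ℝ) : 0 ≤ invSqrt x := by unfold invSqrt; positivity

lemma measurable_invSqrt : Measurable invSqrt := by unfold invSqrt; fun_prop

lemma invSqrt_neg (x : ℝ) : invSqrt (-x) = invSqrt x := by rw [invSqrt, abs_neg, invSqrt]

lemma invSqrt_mul (x y : ℝ) : invSqrt (x * y) = invSqrt x * invSqrt y := by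
  rw [invSqrt, abs_mul, sqrt_mul (abs_nonneg x), mul_inv, ← invSqrt, ← invSqrt]

lemma invSqrt_mul_self (x : ℝ) : invSqrt x * invSqrt x = |x|⁻¹ := by
  rw [invSqrt, ← mul_inv, mul_self_sqrt (abs_nonneg x)]

lemma invSqrt_anti (hx : x ≠ 0) (hxy : |x| ≤ |y|) : invSqrt y ≤ invSqrt x := by
  have := abs_pos.2 hx
  unfold invSqrt
  gcongr

lemma one_le_invSqrt (hx : x ≠ 0) (hx1 : |x| ≤ 1) : 1 ≤ invSqrt x := by
  simpa [invSqrt] using invSqrt_anti (y := 1) hx (by simpa using hx1)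

lemma invSqrt_le_mul (hk : 0 < k) (hy : y ≠ 0) (h : k * |y| ≤ |x|) :
    invSqrt x ≤ invSqrt k * invSqrt y := by
  rw [← invSqrt_mul]
  exact invSqrt_anti (mul_ne_zero hk.ne' hy) (by rwa [abs_mul, abs_of_pos hk])

lemma abs_mul_invSqrt_le_one (hx : |x| ≤ 1) : |x| * invSqrt x ≤ 1 := by
  rw [invSqrt, ← div_eq_mul_inv, div_sqrt]
  exact sqrt_le_one.2 hx

lemma intervalIntegrable_invSqrt (a b : ℝ) : IntervalIntegrable invSqrt volume a b := by
  suffices h : ∀ t, IntervalIntegrable invSqrt volume 0 t from (h a).symm.trans (h b)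
  refine fun t => intervalIntegrable_of_even (fun x => (invSqrt_neg x).symm) fun t ht => ?_
  refine (intervalIntegral.intervalIntegrable_rpow' (r := -(1 / 2)) (by norm_num)).congr ?_
  intro x hx
  rw [uIoc_of_le ht.le] at hx
  simp only [invSqrt, abs_of_pos hx.1, sqrt_eq_rpow, rpow_neg hx.1.le]

lemma integrableOn_invSqrt_sub (a : ℝ) :
    IntegrableOn (fun x => invSqrt (x - a)) (Ioo 0 1) := by
  rw [← intervalIntegrable_iff_integrableOn_Ioo_of_le zero_le_one]
  simpa using (intervalIntegrable_invSqrt (0 - a) (1 - a)).comp_sub_right a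

lemma integral_invSqrt_sub_le (ha : a ∈ Icc (0 : ℝ) 1) :
    ∫ x in Ioo 0 1, invSqrt (x - a) ≤ ∫ x in (-1)..1, invSqrt x := by
  rw [← integral_Ioc_eq_integral_Ioo,
    ← intervalIntegral.integral_of_le zero_le_one, intervalIntegral.integral_comp_sub_right]
  exact intervalIntegral.integral_mono_interval (by linarith [ha.2]) (by linarith)
    (by linarith [ha.1]) (ae_of_all _ invSqrt_nonneg) (intervalIntegrable_invSqrt _ _)

/-- The weight `1 / √(x (1 - x))`, which measures the loss of control of `sin (f x - f y)` when the
two points approach opposite ends of the unit interval. -/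
noncomputable def edgeWeight (x : ℝ) : ℝ := invSqrt (x * (1 - x))

lemma edgeWeight_nonneg (x : ℝ) : 0 ≤ edgeWeight x := invSqrt_nonneg _

lemma mul_one_sub_pos (hx : x ∈ Ioo (0 : ℝ) 1) : 0 < x * (1 - x) :=
  mul_pos hx.1 (sub_pos.2 hx.2)

lemma one_le_edgeWeight (hx : x ∈ Ioo (0 : ℝ) 1) : 1 ≤ edgeWeight x := by
  have hpos := mul_one_sub_pos hx
  refine one_le_invSqrt hpos.ne' ?_
  rw [abs_of_pos hpos]
  nlinarith [sq_nonneg x, hx.2]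

lemma edgeWeight_le (hx : x ∈ Ioo (0 : ℝ) 1) : edgeWeight x ≤ invSqrt x + invSqrt (x - 1) := by
  obtain ⟨hx0, hx1⟩ := hx
  have hx1' := sub_pos.2 hx1
  have hs := sqrt_pos.2 hx0
  have ht := sqrt_pos.2 hx1'
  rw [edgeWeight, invSqrt_mul, ← invSqrt_neg (x - 1), neg_sub]
  simp only [invSqrt, abs_of_pos hx0, abs_of_pos hx1']
  rw [inv_add_inv hs.ne' ht.ne', ← mul_inv, ← one_div]
  gcongr
  nlinarith [sq_sqrt hx0.le, sq_sqrt hx1'.le]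

lemma integrableOn_edgeWeight : IntegrableOn edgeWeight (Ioo 0 1) := by
  refine ((integrableOn_invSqrt_sub 0).add (integrableOn_invSqrt_sub 1)).mono'
    (measurable_invSqrt.comp (by fun_prop)).aestronglyMeasurable ?_
  filter_upwards [ae_restrict_mem measurableSet_Ioo] with x hx
  simpa [abs_of_nonneg (edgeWeight_nonneg x)] using edgeWeight_le hx

end InverseSquareRoot

section Logarithm

variable {a b : ℝ}

-- With `t = (log a - log b) / 2`, this is the inequality `|t| ≤ |sinh t|`.
lemma abs_log_sub_log_le_of_pos (ha : 0 < a) (hb : 0 < b) :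
    |log a - log b| ≤ |a - b| * (invSqrt a * invSqrt b) := by
  have hsa := sqrt_pos.2 ha
  have hsb := sqrt_pos.2 hb
  set t := log (√a / √b) with ht
  have hlog : log a - log b = 2 * t := by
    rw [ht, log_div hsa.ne' hsb.ne', log_sqrt ha.le, log_sqrt hb.le]
    ring
  have hsinh : (a - b) * (invSqrt a * invSqrt b) = 2 * sinh t := by
    rw [ht, sinh_log (by positivity), invSqrt, invSqrt, abs_of_pos ha, abs_of_pos hb]
    field_simp
    rw [sq_sqrt ha.le, sq_sqrt hb.le]
  have hle : |t| ≤ |sinh t| := by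
    rw [abs_sinh]
    exact self_le_sinh_iff.2 (abs_nonneg t)
  have hnonneg : 0 ≤ invSqrt a * invSqrt b := mul_nonneg (invSqrt_nonneg a) (invSqrt_nonneg b)
  rw [← abs_of_nonneg hnonneg, ← abs_mul, hlog, hsinh, abs_mul, abs_mul]
  gcongr

lemma abs_log_sub_log_le (ha : a ≠ 0) (hb : b ≠ 0) :
    |log a - log b| ≤ |a - b| * (invSqrt a * invSqrt b) := by
  have hnonneg : 0 ≤ invSqrt a * invSqrt b := mul_nonneg (invSqrt_nonneg a) (invSqrt_nonneg b)
  calc |log a - log b| = |log (|a|) - log (|b|)| := by rw [log_abs, log_abs]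
    _ ≤ abs (|a| - |b|) * (invSqrt (|a|) * invSqrt (|b|)) :=
      abs_log_sub_log_le_of_pos (abs_pos.2 ha) (abs_pos.2 hb)
    _ = abs (|a| - |b|) * (invSqrt a * invSqrt b) := by simp only [invSqrt, abs_abs]
    _ ≤ |a - b| * (invSqrt a * invSqrt b) :=
      mul_le_mul_of_nonneg_right (abs_abs_sub_abs_le_abs_sub a b) hnonneg

lemma abs_log_sub_log_le_two_mul (hb : b ≠ 0) (hab : |a - b| ≤ |b| / 2) :
    |log a - log b| ≤ 2 * (|a - b| / |b|) := by
  have hbpos := abs_pos.2 hb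
  have hba : 1 / 2 * |b| ≤ |a| := by
    linarith [abs_sub_abs_le_abs_sub b a, abs_sub_comm a b]
  have ha : a ≠ 0 := abs_pos.1 (by linarith)
  have hhalf : invSqrt (1 / 2) ≤ 2 := by
    rw [invSqrt, abs_of_pos one_half_pos]
    refine inv_le_of_inv_le₀ two_pos (le_sqrt_of_sq_le ?_)
    norm_num
  have hnonneg := invSqrt_nonneg b
  calc |log a - log b| ≤ |a - b| * (invSqrt a * invSqrt b) := abs_log_sub_log_le ha hb
    _ ≤ |a - b| * (2 * invSqrt b * invSqrt b) := by
      gcongr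
      exact (invSqrt_le_mul one_half_pos hb hba).trans (by gcongr)
    _ = 2 * (|a - b| / |b|) := by rw [mul_assoc 2, invSqrt_mul_self]; ring

lemma abs_log_le_invSqrt (ha : |a| ≤ 1) : |log a| ≤ invSqrt a := by
  rcases eq_or_ne a 0 with rfl | ha0
  · simp [invSqrt]
  have h := abs_log_sub_log_le_of_pos (abs_pos.2 ha0) one_pos
  simp only [log_abs, log_one, sub_zero, invSqrt, abs_abs, abs_one, sqrt_one, inv_one,
    mul_one] at h
  refine h.trans (mul_le_of_le_one_left (by positivity) ?_)
  exact abs_le.2 ⟨by linarith [abs_nonneg a], by linarith⟩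

end Logarithm

-- A minimiser `a` of `‖h‖` satisfies `‖h x - h a‖ ≤ 2 ‖h x‖`.
lemma exists_mul_dist_le_two_mul_norm {α E : Type*} [PseudoMetricSpace α]
    [SeminormedAddCommGroup E] {s : Set α} {h : α → E} {k : ℝ} (hs : IsCompact s)
    (hne : s.Nonempty) (hcont : ContinuousOn h s)
    (hexp : ∀ x ∈ s, ∀ y ∈ s, k * dist x y ≤ ‖h x - h y‖) :
    ∃ a ∈ s, ∀ x ∈ s, k * dist x a ≤ 2 * ‖h x‖ := by
  obtain ⟨a, ha, hmin⟩ := hs.exists_isMinOn hne hcont.norm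
  refine ⟨a, ha, fun x hx => ?_⟩
  have hax : ‖h a‖ ≤ ‖h x‖ := hmin hx
  linarith [hexp x hx a ha, norm_sub_le (h x) (h a)]

lemma two_div_pi_mul_abs_sub_round_le_abs_sin (u : ℝ) :
    2 / π * |u - round (u / π) * π| ≤ |sin u| := by
  have hle : |u - round (u / π) * π| ≤ π / 2 := by
    calc |u - round (u / π) * π| = |u / π - round (u / π)| * π := by
          rw [← abs_of_pos pi_pos, ← abs_mul, abs_of_pos pi_pos, sub_mul,
            div_mul_cancel₀ _ pi_ne_zero]
      _ ≤ 1 / 2 * π := by gcongr; exact abs_sub_round _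
      _ = π / 2 := by ring
  simpa [sin_sub_int_mul_pi, abs_mul] using mul_abs_le_abs_sin hle

/-- A function on the unit interval that expands distances by the factor `k` and stays closest to
the finitely many multiples `n * π`, `n ∈ S`. It is then close to each of them only near one point,
which makes `log (sin (h x))` integrable with bounds depending only on `k` and `S`. -/
structure ExpandingPhase (h : ℝ → ℝ) (k : ℝ) (S : Finset ℤ) : Prop where
  k_pos : 0 < k
  continuousOn : ContinuousOn h (Icc 0 1)
  mul_abs_sub_le : ∀ x ∈ Icc (0 : ℝ) 1, ∀ y ∈ Icc (0 : ℝ) 1, k * |x - y| ≤ |h x - h y|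
  round_mem : ∀ x ∈ Icc (0 : ℝ) 1, round (h x / π) ∈ S

namespace ExpandingPhase

variable {h : ℝ → ℝ} {k : ℝ} {S : Finset ℤ}

lemma exists_mul_abs_sub_le_abs_sin (hh : ExpandingPhase h k S) :
    ∃ z : ℤ → ℝ, (∀ n, z n ∈ Icc (0 : ℝ) 1) ∧
      ∀ x ∈ Icc (0 : ℝ) 1, ∃ n ∈ S, k / π * |x - z n| ≤ |sin (h x)| := by
  have hzero (n : ℤ) : ∃ a ∈ Icc (0 : ℝ) 1, ∀ x ∈ Icc (0 : ℝ) 1,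
      k * |x - a| ≤ 2 * |h x - n * π| :=
    exists_mul_dist_le_two_mul_norm (h := fun x => h x - n * π) isCompact_Icc ⟨0, by simp⟩
      (hh.continuousOn.sub continuousOn_const)
      fun x hx y hy => by simpa [Real.dist_eq] using hh.mul_abs_sub_le x hx y hy
  choose z hz hzle using hzero
  refine ⟨z, hz, fun x hx => ⟨round (h x / π), hh.round_mem x hx, ?_⟩⟩
  calc k / π * |x - z (round (h x / π))|
      = 1 / π * (k * |x - z (round (h x / π))|) := by ring
    _ ≤ 1 / π * (2 * |h x - round (h x / π) * π|) :=
        mul_le_mul_of_nonneg_left (hzle _ x hx) (by positivity)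
    _ = 2 / π * |h x - round (h x / π) * π| := by ring
    _ ≤ |sin (h x)| := two_div_pi_mul_abs_sub_round_le_abs_sin _

lemma exists_invSqrt_sin_le_sum (hh : ExpandingPhase h k S) :
    ∃ z : ℤ → ℝ, (∀ n, z n ∈ Icc (0 : ℝ) 1) ∧ ∀ᵐ x ∂volume.restrict (Ioo (0 : ℝ) 1),
      sin (h x) ≠ 0 ∧ invSqrt (sin (h x)) ≤ invSqrt (k / π) * ∑ n ∈ S, invSqrt (x - z n) := by
  obtain ⟨z, hz, hsin⟩ := hh.exists_mul_abs_sub_le_abs_sin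
  have hk' : 0 < k / π := div_pos hh.k_pos pi_pos
  have hne : ∀ᵐ x : ℝ, ∀ n, x ≠ z n := ae_all_iff.2 fun n => Measure.ae_ne volume (z n)
  refine ⟨z, hz, ?_⟩
  filter_upwards [ae_restrict_mem measurableSet_Ioo, ae_restrict_of_ae hne] with x hx hxz
  obtain ⟨n, hn, hle⟩ := hsin x (Ioo_subset_Icc_self hx)
  have hxn := sub_ne_zero.2 (hxz n)
  refine ⟨abs_pos.1 ((mul_pos hk' (abs_pos.2 hxn)).trans_le hle), ?_⟩
  refine (invSqrt_le_mul hk' hxn hle).trans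
    (mul_le_mul_of_nonneg_left ?_ (invSqrt_nonneg _))
  exact Finset.single_le_sum (f := fun m => invSqrt (x - z m)) (fun _ _ => invSqrt_nonneg _) hn

lemma ae_sin_ne_zero (hh : ExpandingPhase h k S) :
    ∀ᵐ x ∂volume.restrict (Ioo (0 : ℝ) 1), sin (h x) ≠ 0 := by
  obtain ⟨z, -, hle⟩ := hh.exists_invSqrt_sin_le_sum
  exact hle.mono fun x hx => hx.1

lemma integrableOn_invSqrt_sin (hh : ExpandingPhase h k S) :
    IntegrableOn (fun x => invSqrt (sin (h x))) (Ioo 0 1) := by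
  obtain ⟨z, -, hle⟩ := hh.exists_invSqrt_sin_le_sum
  have hmeas := aemeasurable_restrict_Ioo hh.continuousOn
  refine ((integrable_finsetSum S fun n _ => integrableOn_invSqrt_sub (z n)).const_mul
    (invSqrt (k / π))).mono'
    (measurable_invSqrt.comp_aemeasurable hmeas.sin).aestronglyMeasurable ?_
  filter_upwards [hle] with x hx
  simpa [abs_of_nonneg (invSqrt_nonneg _)] using hx.2

lemma integral_invSqrt_sin_le (hh : ExpandingPhase h k S) :
    ∫ x in Ioo 0 1, invSqrt (sin (h x)) ≤
      invSqrt (k / π) * (S.card * ∫ x in (-1)..1, invSqrt x) := by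
  obtain ⟨z, hz, hle⟩ := hh.exists_invSqrt_sin_le_sum
  have hint (n : ℤ) : IntegrableOn (fun x => invSqrt (x - z n)) (Ioo 0 1) :=
    integrableOn_invSqrt_sub (z n)
  calc ∫ x in Ioo 0 1, invSqrt (sin (h x))
      ≤ ∫ x in Ioo 0 1, invSqrt (k / π) * ∑ n ∈ S, invSqrt (x - z n) :=
        integral_mono_ae (hh.integrableOn_invSqrt_sin)
          ((integrable_finsetSum S fun n _ => hint n).const_mul _) (hle.mono fun x hx => hx.2)
    _ = invSqrt (k / π) * ∑ n ∈ S, ∫ x in Ioo 0 1, invSqrt (x - z n) := by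
        rw [integral_const_mul, integral_finsetSum S fun n _ => hint n]
    _ ≤ invSqrt (k / π) * ∑ _n ∈ S, ∫ x in (-1)..1, invSqrt x := by
        gcongr with n
        · exact invSqrt_nonneg _
        · exact integral_invSqrt_sub_le (hz n)
    _ = invSqrt (k / π) * (S.card * ∫ x in (-1)..1, invSqrt x) := by
        rw [Finset.sum_const, nsmul_eq_mul]

lemma integrableOn_log_sin (hh : ExpandingPhase h k S) :
    IntegrableOn (fun x => log (sin (h x))) (Ioo 0 1) := by
  have hmeas := aemeasurable_restrict_Ioo hh.continuousOn
  exact hh.integrableOn_invSqrt_sin.mono' hmeas.sin.log.aestronglyMeasurable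
    (ae_of_all _ fun x => abs_log_le_invSqrt (abs_sin_le_one _))

end ExpandingPhase

lemma two_div_pi_mul_min_le_abs_sin {u : ℝ} (hu : |u| ≤ π) :
    2 / π * min |u| (π - |u|) ≤ |sin u| := by
  rcases le_total |u| (π / 2) with hsmall | hlarge
  · exact le_trans (by gcongr; exact min_le_left _ _) (mul_abs_le_abs_sin hsmall)
  · have hle : |(π - |u|)| ≤ π / 2 := by
      rw [abs_of_nonneg (sub_nonneg.2 hu)]
      linarith
    calc 2 / π * min |u| (π - |u|) ≤ 2 / π * |(π - |u|)| := by
          gcongr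
          exact (min_le_right _ _).trans (le_abs_self _)
      _ ≤ |sin (π - |u|)| := mul_abs_le_abs_sin hle
      _ = |sin u| := by
          rw [sin_pi_sub]
          rcases abs_choice u with h | h <;> simp [h]

lemma abs_cot_le_inv_abs_sin (u : ℝ) : |cot u| ≤ |sin u|⁻¹ := by
  rw [cot_eq_cos_div_sin, abs_div, div_eq_mul_inv]
  exact mul_le_of_le_one_left (by positivity) (abs_cos_le_one u)

/-- A decreasing profile on the unit interval which falls at rate at least `c` and by at most `π` in
total, so that `sin (f x - f y)` vanishes only on the diagonal and possibly at opposite corners. -/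
structure SteepProfile (f : ℝ → ℝ) (c : ℝ) : Prop where
  c_pos : 0 < c
  continuousOn : ContinuousOn f (Icc 0 1)
  mul_sub_le : ∀ x ∈ Icc (0 : ℝ) 1, ∀ y ∈ Icc (0 : ℝ) 1, x ≤ y → c * (y - x) ≤ f x - f y
  drop_le : f 0 - f 1 ≤ π

namespace SteepProfile

variable {f : ℝ → ℝ} {c x y : ℝ}

lemma mul_abs_sub_le (hf : SteepProfile f c) (hx : x ∈ Icc (0 : ℝ) 1) (hy : y ∈ Icc (0 : ℝ) 1) :
    c * |x - y| ≤ |f x - f y| := by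
  rcases le_total x y with hxy | hyx
  · rw [abs_sub_comm, abs_of_nonneg (sub_nonneg.2 hxy)]
    exact (hf.mul_sub_le x hx y hy hxy).trans (le_abs_self _)
  · rw [abs_of_nonneg (sub_nonneg.2 hyx), abs_sub_comm (f x)]
    exact (hf.mul_sub_le y hy x hx hyx).trans (le_abs_self _)

lemma abs_sub_le_pi_sub (hf : SteepProfile f c) (hx : x ∈ Icc (0 : ℝ) 1)
    (hy : y ∈ Icc (0 : ℝ) 1) : |f x - f y| ≤ π - c * (1 - |x - y|) := by
  wlog hxy : x ≤ y generalizing x y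
  · simpa only [abs_sub_comm] using this hy hx (le_of_not_ge hxy)
  have hleft := hf.mul_sub_le 0 (by simp) x hx hx.1
  have hright := hf.mul_sub_le y hy 1 (by simp) hy.2
  have hnonneg : 0 ≤ f x - f y :=
    (mul_nonneg hf.c_pos.le (sub_nonneg.2 hxy)).trans (hf.mul_sub_le x hx y hy hxy)
  rw [abs_of_nonneg hnonneg, abs_sub_comm, abs_of_nonneg (sub_nonneg.2 hxy)]
  linarith [hf.drop_le]

lemma abs_sub_le_pi (hf : SteepProfile f c) (hx : x ∈ Icc (0 : ℝ) 1) (hy : y ∈ Icc (0 : ℝ) 1) :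
    |f x - f y| ≤ π := by
  have hxy : |x - y| ≤ 1 := abs_le.2 ⟨by linarith [hx.1, hy.2], by linarith [hx.2, hy.1]⟩
  linarith [hf.abs_sub_le_pi_sub hx hy, mul_nonneg hf.c_pos.le (sub_nonneg.2 hxy)]

lemma mul_le_abs_sin (hf : SteepProfile f c) (hx : x ∈ Icc (0 : ℝ) 1) (hy : y ∈ Icc (0 : ℝ) 1) :
    2 / π * c * (|x - y| * (1 - |x - y|)) ≤ |sin (f x - f y)| := by
  have hc := hf.c_pos
  have hxy : |x - y| ≤ 1 := abs_le.2 ⟨by linarith [hx.1, hy.2], by linarith [hx.2, hy.1]⟩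
  have hnonneg := abs_nonneg (x - y)
  refine le_trans ?_ (two_div_pi_mul_min_le_abs_sin (hf.abs_sub_le_pi hx hy))
  rw [mul_assoc]
  gcongr
  refine le_min (le_trans ?_ (hf.mul_abs_sub_le hx hy))
    (le_trans ?_ (le_sub_comm.1 (hf.abs_sub_le_pi_sub hx hy)))
  · gcongr
    exact mul_le_of_le_one_right hnonneg (by linarith)
  · gcongr
    exact mul_le_of_le_one_left (by linarith) hxy

lemma mul_edge_le_abs_sin (hf : SteepProfile f c) (hx : x ∈ Icc (0 : ℝ) 1)
    (hy : y ∈ Icc (0 : ℝ) 1) :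
    2 / π * c * (y * (1 - y)) * |x - y| ≤ |sin (f x - f y)| := by
  have hc := hf.c_pos
  have hedge : y * (1 - y) ≤ 1 - |x - y| := by
    rcases abs_cases (x - y) with ⟨h, -⟩ | ⟨h, -⟩ <;> rw [h] <;>
      nlinarith [hx.1, hx.2, hy.1, hy.2]
  refine le_trans ?_ (hf.mul_le_abs_sin hx hy)
  rw [mul_assoc _ (y * (1 - y)), mul_comm (y * (1 - y))]
  gcongr

lemma sin_ne_zero (hf : SteepProfile f c) (hx : x ∈ Icc (0 : ℝ) 1) (hy : y ∈ Ioo (0 : ℝ) 1)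
    (hxy : x ≠ y) : sin (f x - f y) ≠ 0 := by
  have hc := hf.c_pos
  have hy' := mul_one_sub_pos hy
  have hpos := abs_pos.2 (sub_ne_zero.2 hxy)
  exact abs_pos.1 <| lt_of_lt_of_le (by positivity)
    (hf.mul_edge_le_abs_sin hx (Ioo_subset_Icc_self hy))

lemma sin_ne_zero_of_mem_Ioo_left (hf : SteepProfile f c) (hx : x ∈ Ioo (0 : ℝ) 1)
    (hy : y ∈ Icc (0 : ℝ) 1) (hxy : x ≠ y) : sin (f x - f y) ≠ 0 := by
  rw [← neg_sub, sin_neg, neg_ne_zero]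
  exact hf.sin_ne_zero hy hx hxy.symm

lemma invSqrt_sin_le (hf : SteepProfile f c) (hx : x ∈ Icc (0 : ℝ) 1) (hy : y ∈ Ioo (0 : ℝ) 1) :
    invSqrt (sin (f x - f y)) ≤ invSqrt (2 / π * c) * edgeWeight y * invSqrt (x - y) := by
  have hc := hf.c_pos
  rcases eq_or_ne x y with rfl | hxy
  · simp [invSqrt]
  rw [edgeWeight, ← invSqrt_mul]
  have hy' := mul_one_sub_pos hy
  exact invSqrt_le_mul (by positivity) (sub_ne_zero.2 hxy)
    (hf.mul_edge_le_abs_sin hx (Ioo_subset_Icc_self hy))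

-- Splitting `|sin|⁻¹` into two square roots costs only one, integrable, weight in each variable.
lemma abs_sub_mul_inv_abs_sin_le (hf : SteepProfile f c) (hx : x ∈ Ioo (0 : ℝ) 1)
    (hy : y ∈ Ioo (0 : ℝ) 1) :
    |x - y| * |sin (f x - f y)|⁻¹ ≤ (2 / π * c)⁻¹ * (edgeWeight x * edgeWeight y) := by
  have hc := hf.c_pos
  set κ := 2 / π * c
  have hκpos : 0 < κ := by positivity
  have hle_y := hf.invSqrt_sin_le (Ioo_subset_Icc_self hx) hy
  have hle_x : invSqrt (sin (f x - f y)) ≤ invSqrt κ * edgeWeight x * invSqrt (x - y) := by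
    have h := hf.invSqrt_sin_le (Ioo_subset_Icc_self hy) hx
    rwa [← neg_sub (f x), sin_neg, invSqrt_neg, ← neg_sub x, invSqrt_neg] at h
  have hκ' := invSqrt_nonneg κ
  have hwx := edgeWeight_nonneg x
  have hwy := edgeWeight_nonneg y
  have hxy := invSqrt_nonneg (x - y)
  calc |x - y| * |sin (f x - f y)|⁻¹
      = |x - y| * (invSqrt (sin (f x - f y)) * invSqrt (sin (f x - f y))) := by
        rw [invSqrt_mul_self]
    _ ≤ |x - y| * ((invSqrt κ * edgeWeight x * invSqrt (x - y)) *
          (invSqrt κ * edgeWeight y * invSqrt (x - y))) := by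
        gcongr
        exact invSqrt_nonneg _
    _ = (|x - y| * |x - y|⁻¹) * (κ⁻¹ * (edgeWeight x * edgeWeight y)) := by
        rw [← invSqrt_mul_self (x - y), ← abs_of_pos (inv_pos.2 hκpos), abs_inv,
          ← invSqrt_mul_self κ]
        ring
    _ ≤ κ⁻¹ * (edgeWeight x * edgeWeight y) :=
        mul_le_of_le_one_left (by positivity) mul_inv_le_one

lemma abs_cot_mul_sub_le {q : ℝ → ℝ} {Q : ℝ≥0} (hf : SteepProfile f c)
    (hq : LipschitzOnWith Q q (Icc 0 1)) (hx : x ∈ Ioo (0 : ℝ) 1) (hy : y ∈ Ioo (0 : ℝ) 1) :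
    |cot (f x - f y) * (q x - q y)| ≤ Q * (2 / π * c)⁻¹ * (edgeWeight x * edgeWeight y) := by
  have hqxy : |q x - q y| ≤ Q * |x - y| := by
    simpa only [Real.dist_eq] using
      hq.dist_le_mul x (Ioo_subset_Icc_self hx) y (Ioo_subset_Icc_self hy)
  calc |cot (f x - f y) * (q x - q y)| ≤ |sin (f x - f y)|⁻¹ * (Q * |x - y|) := by
        rw [abs_mul]
        gcongr
        exact abs_cot_le_inv_abs_sin _
    _ = Q * (|x - y| * |sin (f x - f y)|⁻¹) := by ring
    _ ≤ Q * ((2 / π * c)⁻¹ * (edgeWeight x * edgeWeight y)) := by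
        gcongr ?_ * ?_
        exact hf.abs_sub_mul_inv_abs_sin_le hx hy
    _ = Q * (2 / π * c)⁻¹ * (edgeWeight x * edgeWeight y) := by ring

lemma abs_log_sin_le (hf : SteepProfile f c) (hx : x ∈ Icc (0 : ℝ) 1) (hy : y ∈ Icc (0 : ℝ) 1)
    (hxy : x ≠ y) (hxy1 : |x - y| < 1) :
    |log (sin (f x - f y))| ≤ invSqrt (2 / π * c) * edgeWeight |x - y| := by
  have hc := hf.c_pos
  have hpos : 0 < |x - y| * (1 - |x - y|) :=
    mul_one_sub_pos ⟨abs_pos.2 (sub_ne_zero.2 hxy), hxy1⟩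
  refine (abs_log_le_invSqrt (abs_sin_le_one _)).trans
    (invSqrt_le_mul (by positivity) hpos.ne' ?_)
  rw [abs_of_pos hpos]
  exact hf.mul_le_abs_sin hx hy

end SteepProfile

lemma hasDerivAt_integral_of_lipschitz_at {α E : Type*} [MeasurableSpace α] {μ : Measure α}
    [NormedAddCommGroup E] [NormedSpace ℝ E] {F : ℝ → α → E} {F' : α → E} {bound : α → ℝ}
    {s : Set ℝ} {x₀ : ℝ} (hs : s ∈ 𝓝 x₀)
    (hF_meas : ∀ x ∈ s, AEStronglyMeasurable (F x) μ) (hF_int : Integrable (F x₀) μ)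
    (hF'_meas : AEStronglyMeasurable F' μ)
    (hF_lip : ∀ᵐ a ∂μ, ∀ x ∈ s, ‖F x a - F x₀ a‖ ≤ bound a * ‖x - x₀‖)
    (hbound : Integrable bound μ) (hF_deriv : ∀ᵐ a ∂μ, HasDerivAt (F · a) (F' a) x₀) :
    HasDerivAt (fun x => ∫ a, F x a ∂μ) (∫ a, F' a ∂μ) x₀ := by
  let span : E ≃L[ℝ] (ℝ →L[ℝ] E) := ContinuousLinearMap.toSpanSingletonCLE
  have hderiv := (hasFDerivAt_integral_of_dominated_loc_of_lip' hs hF_meas hF_int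
    (span.continuous.comp_aestronglyMeasurable hF'_meas) hF_lip hbound hF_deriv).2
  rw [hasDerivAt_iff_hasFDerivAt]
  change HasFDerivAt _ (span (∫ a, F' a ∂μ)) x₀
  rw [← span.integral_comp_comm]
  exact hderiv

namespace SteepProfile

variable {f g : ℝ → ℝ} {c ε x y : ℝ} {W : ℝ≥0}

lemma abs_perturbation_sub_le (hg : LipschitzOnWith W g (Icc 0 1)) (hx : x ∈ Icc (0 : ℝ) 1)
    (hy : y ∈ Icc (0 : ℝ) 1) :
    |f x + ε * g x - (f y + ε * g y) - (f x - f y)| ≤ |ε| * W * |x - y| := by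
  have hgxy : |g x - g y| ≤ W * |x - y| := by
    simpa only [Real.dist_eq] using hg.dist_le_mul x hx y hy
  calc |f x + ε * g x - (f y + ε * g y) - (f x - f y)| = |ε| * |g x - g y| := by
        rw [← abs_mul]
        congr 1
        ring
    _ ≤ |ε| * (W * |x - y|) := by gcongr
    _ = |ε| * W * |x - y| := by ring

lemma expandingPhase_perturbation (hf : SteepProfile f c) (hg : LipschitzOnWith W g (Icc 0 1))
    (hεc : |ε| * W ≤ c / 2) (hεπ : |ε| * W < π / 2) (hy : y ∈ Icc (0 : ℝ) 1) :
    ExpandingPhase (fun x => f x + ε * g x - (f y + ε * g y)) (c / 2) (Finset.Icc (-1) 1) where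
  k_pos := half_pos hf.c_pos
  continuousOn := (hf.continuousOn.add (hg.continuousOn.const_smul ε)).sub continuousOn_const
  mul_abs_sub_le x hx z hz := by
    have hperturb := abs_perturbation_sub_le (f := f) (ε := ε) hg hx hz
    have hle : |ε| * W * |x - z| ≤ c / 2 * |x - z| := by gcongr
    rw [sub_sub_sub_cancel_right]
    linarith [hf.mul_abs_sub_le hx hz, abs_sub_abs_le_abs_sub (f x - f z)
      (f x + ε * g x - (f z + ε * g z)), abs_sub_comm (f x - f z)
      (f x + ε * g x - (f z + ε * g z))]
  round_mem x hx := by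
    have hxy : |x - y| ≤ 1 := abs_le.2 ⟨by linarith [hx.1, hy.2], by linarith [hx.2, hy.1]⟩
    have hperturb := abs_perturbation_sub_le (f := f) (ε := ε) hg hx hy
    have hle : |ε| * W * |x - y| ≤ |ε| * W := mul_le_of_le_one_right (by positivity) hxy
    set u := f x + ε * g x - (f y + ε * g y)
    have hu : |u / π| < 3 / 2 := by
      rw [abs_div, abs_of_pos pi_pos, div_lt_iff₀ pi_pos]
      linarith [hf.abs_sub_le_pi hx hy, abs_sub_abs_le_abs_sub u (f x - f y)]
    obtain ⟨hu_neg, hu_pos⟩ := abs_lt.1 hu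
    obtain ⟨hr_neg, hr_pos⟩ := abs_le.1 (abs_sub_round (u / π))
    rw [Finset.mem_Icc]
    constructor <;> rw [← Int.sub_one_lt_iff] <;> rify <;> linarith

lemma expandingPhase (hf : SteepProfile f c) (hy : y ∈ Icc (0 : ℝ) 1) :
    ExpandingPhase (fun x => f x - f y) (c / 2) (Finset.Icc (-1) 1) := by
  have hc := hf.c_pos
  simpa using hf.expandingPhase_perturbation (g := fun _ => 0) (ε := 0) (W := 0)
    (LipschitzWith.const 0).lipschitzOnWith (by simpa using (half_pos hc).le)
    (by simpa using pi_pos) hy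

lemma abs_log_sin_perturbation_sub_le (hf : SteepProfile f c)
    (hg : LipschitzOnWith W g (Icc 0 1)) (hx : x ∈ Icc (0 : ℝ) 1) (hy : y ∈ Ioo (0 : ℝ) 1)
    (hxy : x ≠ y) (hne : sin (f x + ε * g x - (f y + ε * g y)) ≠ 0) :
    |log (sin (f x + ε * g x - (f y + ε * g y))) - log (sin (f x - f y))| ≤
      |ε| * W * (invSqrt (2 / π * c) * edgeWeight y) *
        invSqrt (sin (f x + ε * g x - (f y + ε * g y))) := by
  have hy' := Ioo_subset_Icc_self hy
  have hxy1 : |x - y| ≤ 1 := abs_le.2 ⟨by linarith [hx.1, hy.2], by linarith [hx.2, hy.1]⟩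
  set u := f x + ε * g x - (f y + ε * g y)
  have hsin : |sin u - sin (f x - f y)| ≤ |ε| * W * |x - y| :=
    (abs_sin_sub_sin_le _ _).trans (abs_perturbation_sub_le hg hx hy')
  have hu' := invSqrt_nonneg (sin u)
  have hκ := invSqrt_nonneg (2 / π * c)
  have hw := edgeWeight_nonneg y
  calc |log (sin u) - log (sin (f x - f y))|
      ≤ |sin u - sin (f x - f y)| * (invSqrt (sin u) * invSqrt (sin (f x - f y))) :=
        abs_log_sub_log_le hne (hf.sin_ne_zero hx hy hxy)
    _ ≤ |ε| * W * |x - y| *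
          (invSqrt (sin u) * (invSqrt (2 / π * c) * edgeWeight y * invSqrt (x - y))) := by
        gcongr ?_ * (_ * ?_)
        · exact mul_nonneg hu' (invSqrt_nonneg _)
        · exact hf.invSqrt_sin_le hx hy
    _ = |ε| * W * (invSqrt (2 / π * c) * edgeWeight y) * invSqrt (sin u) *
          (|x - y| * invSqrt (x - y)) := by ring
    _ ≤ |ε| * W * (invSqrt (2 / π * c) * edgeWeight y) * invSqrt (sin u) :=
        mul_le_of_le_one_right (by positivity) (abs_mul_invSqrt_le_one hxy1)

-- When `f 0 - f 1 = π`, the zero of `sin` at a corner moves into the square as `ε` varies, so no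
-- bound on the integrand is uniform in `ε`; only its integral over `x` is Lipschitz at `ε = 0`.
lemma exists_abs_integral_log_sin_perturbation_sub_le (hf : SteepProfile f c)
    (hg : LipschitzOnWith W g (Icc 0 1)) :
    ∃ M, ∀ᶠ ε in 𝓝 (0 : ℝ), ∀ y ∈ Ioo (0 : ℝ) 1,
      |(∫ x in Ioo 0 1, log (sin (f x + ε * g x - (f y + ε * g y)))) -
        ∫ x in Ioo 0 1, log (sin (f x - f y))| ≤ M * edgeWeight y * |ε| := by
  have hsmall : Tendsto (fun ε : ℝ => |ε| * W) (𝓝 0) (𝓝 0) :=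
    Continuous.tendsto' (by fun_prop) _ _ (by simp)
  refine ⟨W * invSqrt (2 / π * c) * (invSqrt (c / 2 / π) *
    ((Finset.Icc (-1 : ℤ) 1).card * ∫ x in (-1)..1, invSqrt x)), ?_⟩
  filter_upwards [hsmall.eventually (gt_mem_nhds (half_pos hf.c_pos)),
    hsmall.eventually (gt_mem_nhds pi_div_two_pos)] with ε hεc hεπ y hy
  have hy' := Ioo_subset_Icc_self hy
  have hphase := hf.expandingPhase_perturbation hg hεc.le hεπ hy'
  rw [← integral_sub hphase.integrableOn_log_sin (hf.expandingPhase hy').integrableOn_log_sin]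
  set K := |ε| * W * (invSqrt (2 / π * c) * edgeWeight y) with hK
  have hK_nonneg : 0 ≤ K :=
    mul_nonneg (by positivity) (mul_nonneg (invSqrt_nonneg _) (edgeWeight_nonneg _))
  calc |∫ x in Ioo 0 1, (log (sin (f x + ε * g x - (f y + ε * g y))) - log (sin (f x - f y)))|
      ≤ ∫ x in Ioo 0 1, K * invSqrt (sin (f x + ε * g x - (f y + ε * g y))) := by
        rw [← Real.norm_eq_abs]
        refine norm_integral_le_of_norm_le (hphase.integrableOn_invSqrt_sin.const_mul K) ?_
        filter_upwards [ae_restrict_mem measurableSet_Ioo, ae_restrict_ne _ y,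
          hphase.ae_sin_ne_zero] with x hx hxy hne
        exact hf.abs_log_sin_perturbation_sub_le hg (Ioo_subset_Icc_self hx) hy hxy hne
    _ ≤ K * (invSqrt (c / 2 / π) *
          ((Finset.Icc (-1 : ℤ) 1).card * ∫ x in (-1)..1, invSqrt x)) := by
        rw [integral_const_mul]
        exact mul_le_mul_of_nonneg_left hphase.integral_invSqrt_sin_le hK_nonneg
    _ = _ := by rw [hK]; ring

lemma hasDerivAt_log_sin_perturbation (hne : sin (f x - f y) ≠ 0) :
    HasDerivAt (fun ε => log (sin (f x + ε * g x - (f y + ε * g y))))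
      (cot (f x - f y) * (g x - g y)) 0 := by
  have hlin : HasDerivAt (fun ε => f x + ε * g x - (f y + ε * g y)) (g x - g y) 0 := by
    simpa using (((hasDerivAt_id (0 : ℝ)).mul_const (g x)).const_add (f x)).fun_sub
      (((hasDerivAt_id (0 : ℝ)).mul_const (g y)).const_add (f y))
  have hlog := hlin.sin.log (by simpa using hne)
  simp only [zero_mul, add_zero] at hlog
  rwa [cot_eq_cos_div_sin, div_mul_eq_mul_div]

lemma abs_log_sin_perturbation_sub_le_mul (hf : SteepProfile f c)
    (hg : LipschitzOnWith W g (Icc 0 1)) (hx : x ∈ Icc (0 : ℝ) 1) (hy : y ∈ Ioo (0 : ℝ) 1)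
    (hxy : x ≠ y) (hε : |ε| * (W / (2 / π * c * (y * (1 - y)))) ≤ 1 / 2) :
    |log (sin (f x + ε * g x - (f y + ε * g y))) - log (sin (f x - f y))| ≤
      2 * (W / (2 / π * c * (y * (1 - y)))) * |ε| := by
  have hc := hf.c_pos
  have hy_pos := mul_one_sub_pos hy
  have hy' := Ioo_subset_Icc_self hy
  have hne := hf.sin_ne_zero hx hy hxy
  set Q := W / (2 / π * c * (y * (1 - y)))
  have hQ : 0 ≤ Q := by positivity
  have hratio : |sin (f x + ε * g x - (f y + ε * g y)) - sin (f x - f y)| ≤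
      |ε| * Q * |sin (f x - f y)| :=
    calc |sin (f x + ε * g x - (f y + ε * g y)) - sin (f x - f y)|
        ≤ |ε| * W * |x - y| :=
          (abs_sin_sub_sin_le _ _).trans (abs_perturbation_sub_le hg hx hy')
      _ = |ε| * Q * (2 / π * c * (y * (1 - y)) * |x - y|) := by
          rw [← mul_assoc _ _ |x - y|, mul_assoc |ε| Q, div_mul_cancel₀ _ (by positivity)]
      _ ≤ |ε| * Q * |sin (f x - f y)| := by gcongr; exact hf.mul_edge_le_abs_sin hx hy'
  refine (abs_log_sub_log_le_two_mul hne (hratio.trans ?_)).trans ?_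
  · rw [div_eq_inv_mul, ← one_div]
    gcongr
  · rw [mul_assoc]
    gcongr
    rw [div_le_iff₀ (abs_pos.2 hne), mul_comm Q]
    exact hratio

lemma hasDerivAt_integral_log_sin_perturbation (hf : SteepProfile f c)
    (hg : LipschitzOnWith W g (Icc 0 1)) (hy : y ∈ Ioo (0 : ℝ) 1) :
    HasDerivAt (fun ε => ∫ x in Ioo 0 1, log (sin (f x + ε * g x - (f y + ε * g y))))
      (∫ x in Ioo 0 1, cot (f x - f y) * (g x - g y)) 0 := by
  have hf_meas := aemeasurable_restrict_Ioo hf.continuousOn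
  have hg_meas := aemeasurable_restrict_Ioo hg.continuousOn
  set Q := W / (2 / π * c * (y * (1 - y)))
  have hsmall : ∀ᶠ ε : ℝ in 𝓝 0, |ε| * Q < 1 / 2 :=
    (Continuous.tendsto' (by fun_prop) _ _ (by simp)).eventually (gt_mem_nhds one_half_pos)
  refine hasDerivAt_integral_of_lipschitz_at (bound := fun _ => 2 * Q) hsmall
    (fun ε _ => ?_) ?_ ?_ ?_ (integrable_const _) ?_
  · exact AEMeasurable.aestronglyMeasurable (by fun_prop)
  · simpa [IntegrableOn] using (hf.expandingPhase (Ioo_subset_Icc_self hy)).integrableOn_log_sin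
  · simp only [cot_eq_cos_div_sin]
    exact AEMeasurable.aestronglyMeasurable (by fun_prop)
  · filter_upwards [ae_restrict_mem measurableSet_Ioo, ae_restrict_ne _ y] with x hx hxy ε hε
    simpa using hf.abs_log_sin_perturbation_sub_le_mul hg (Ioo_subset_Icc_self hx) hy hxy
      (le_of_lt hε)
  · filter_upwards [ae_restrict_mem measurableSet_Ioo, ae_restrict_ne _ y] with x hx hxy
    exact hasDerivAt_log_sin_perturbation (hf.sin_ne_zero (Ioo_subset_Icc_self hx) hy hxy)

lemma integrableOn_integral_log_sin (hf : SteepProfile f c) :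
    IntegrableOn (fun y => ∫ x in Ioo 0 1, log (sin (f x - f y))) (Ioo 0 1) := by
  have hf_meas := aemeasurable_restrict_Ioo hf.continuousOn
  have hmeas : AEStronglyMeasurable (fun z : ℝ × ℝ => log (sin (f z.2 - f z.1)))
      ((volume.restrict (Ioo 0 1)).prod (volume.restrict (Ioo 0 1))) :=
    (hf_meas.comp_snd.sub hf_meas.comp_fst).sin.log.aestronglyMeasurable
  refine Integrable.of_bound hmeas.integral_prod_right'
    (invSqrt (c / 2 / π) * ((Finset.Icc (-1 : ℤ) 1).card * ∫ x in (-1)..1, invSqrt x)) ?_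
  filter_upwards [ae_restrict_mem measurableSet_Ioo] with y hy
  have hphase := hf.expandingPhase (Ioo_subset_Icc_self hy)
  refine (norm_integral_le_of_norm_le hphase.integrableOn_invSqrt_sin
    (ae_of_all _ fun x => ?_)).trans hphase.integral_invSqrt_sin_le
  exact abs_log_le_invSqrt (abs_sin_le_one _)

theorem hasDerivAt_integral_integral_log_sin (hf : SteepProfile f c)
    (hg : LipschitzOnWith W g (Icc 0 1)) :
    HasDerivAt
      (fun ε => ∫ y in Ioo 0 1, ∫ x in Ioo 0 1, log (sin (f x + ε * g x - (f y + ε * g y))))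
      (∫ y in Ioo 0 1, ∫ x in Ioo 0 1, cot (f x - f y) * (g x - g y)) 0 := by
  have hf_meas := aemeasurable_restrict_Ioo hf.continuousOn
  have hg_meas := aemeasurable_restrict_Ioo hg.continuousOn
  have hf_fst := hf_meas.comp_fst (ν := volume.restrict (Ioo (0 : ℝ) 1))
  have hf_snd := hf_meas.comp_snd (μ := volume.restrict (Ioo (0 : ℝ) 1))
  have hg_fst := hg_meas.comp_fst (ν := volume.restrict (Ioo (0 : ℝ) 1))
  have hg_snd := hg_meas.comp_snd (μ := volume.restrict (Ioo (0 : ℝ) 1))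
  obtain ⟨M, hM⟩ := hf.exists_abs_integral_log_sin_perturbation_sub_le hg
  refine hasDerivAt_integral_of_lipschitz_at (bound := fun y => M * edgeWeight y) hM
    (fun ε _ => ?_) (by simpa [IntegrableOn] using hf.integrableOn_integral_log_sin) ?_ ?_
    (integrableOn_edgeWeight.const_mul M) ?_
  · refine AEStronglyMeasurable.integral_prod_right'
      (f := fun z => log (sin (f z.2 + ε * g z.2 - (f z.1 + ε * g z.1)))) ?_
    exact AEMeasurable.aestronglyMeasurable (by fun_prop)
  · refine AEStronglyMeasurable.integral_prod_right'
      (f := fun z => cot (f z.2 - f z.1) * (g z.2 - g z.1)) ?_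
    simp only [cot_eq_cos_div_sin]
    exact AEMeasurable.aestronglyMeasurable (by fun_prop)
  · filter_upwards [ae_restrict_mem measurableSet_Ioo] with y hy ε hε
    simpa using hε y hy
  · filter_upwards [ae_restrict_mem measurableSet_Ioo] with y hy
    exact hf.hasDerivAt_integral_log_sin_perturbation hg hy

end SteepProfile

section RegularisedCotangent

variable {η u : ℝ}

/-- A bounded odd regularisation of `cot`, for `η > 0`. Being bounded, it may be symmetrised over
the square, where `cot` itself is not integrable. -/
noncomputable def regCot (η u : ℝ) : ℝ := sin u * cos u / (sin u ^ 2 + η)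

/-- The primitive of `regCot η`, a regularisation of `log |sin u|`. -/
noncomputable def regLogSin (η u : ℝ) : ℝ := log (sin u ^ 2 + η) / 2

lemma regCot_neg (η u : ℝ) : regCot η (-u) = -regCot η u := by
  simp only [regCot, sin_neg, cos_neg, neg_sq, neg_mul, neg_div]

lemma continuous_regCot (hη : 0 < η) : Continuous (regCot η) := by
  unfold regCot
  fun_prop (disch := intros; positivity)

lemma abs_regCot_le_inv (hη : 0 < η) (u : ℝ) : |regCot η u| ≤ η⁻¹ := by
  rw [regCot, abs_div, abs_mul, abs_of_pos (by positivity : 0 < sin u ^ 2 + η), ← one_div]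
  gcongr
  · exact mul_le_one₀ (abs_sin_le_one u) (abs_nonneg _) (abs_cos_le_one u)
  · exact le_add_of_nonneg_left (sq_nonneg _)

lemma abs_regCot_le_abs_cot (hη : 0 < η) (u : ℝ) : |regCot η u| ≤ |cot u| := by
  rcases eq_or_ne (sin u) 0 with hs | hs
  · simp [regCot, hs]
  have hcot : cot u = sin u * cos u / sin u ^ 2 := by
    rw [cot_eq_cos_div_sin]
    field_simp
  rw [hcot, regCot, abs_div, abs_div, abs_of_pos (by positivity : 0 < sin u ^ 2 + η),
    abs_of_pos (by positivity : 0 < sin u ^ 2)]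
  gcongr
  exact le_add_of_nonneg_right hη.le

lemma tendsto_regCot (u : ℝ) : Tendsto (fun η => regCot η u) (𝓝[>] 0) (𝓝 (cot u)) := by
  rcases eq_or_ne (sin u) 0 with hs | hs
  · simp [regCot, cot_eq_cos_div_sin, hs]
  have hcont : ContinuousAt (fun η => regCot η u) 0 := by
    unfold regCot
    fun_prop (disch := positivity)
  have hcot : cot u = regCot 0 u := by
    rw [cot_eq_cos_div_sin, regCot, add_zero]
    field_simp
  exact hcot ▸ hcont.tendsto.mono_left nhdsWithin_le_nhds

lemma hasDerivAt_regLogSin (hη : 0 < η) (u : ℝ) :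
    HasDerivAt (regLogSin η) (regCot η u) u := by
  have hsq : HasDerivAt (fun v => sin v ^ 2 + η) (2 * sin u * cos u) u := by
    simpa using ((hasDerivAt_sin u).fun_pow 2).add_const η
  refine ((hsq.log (by positivity)).div_const 2).congr_deriv ?_
  rw [regCot, mul_assoc, mul_div_assoc, mul_div_cancel_left₀ _ two_ne_zero]

lemma tendsto_regLogSin (hs : sin u ≠ 0) :
    Tendsto (fun η => regLogSin η u) (𝓝[>] 0) (𝓝 (log (sin u))) := by
  have hcont : ContinuousAt (fun η => regLogSin η u) 0 := by
    unfold regLogSin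
    fun_prop (disch := simp [hs])
  have hlog : log (sin u) = regLogSin 0 u := by
    simp [regLogSin]
  exact hlog ▸ hcont.tendsto.mono_left nhdsWithin_le_nhds

lemma abs_regLogSin_le (hη : η ∈ Ioc (0 : ℝ) 1) (hs : sin u ≠ 0) :
    |regLogSin η u| ≤ |log (sin u)| + 1 := by
  have hsq : 0 < sin u ^ 2 := by positivity
  have hlower : log (sin u) ≤ regLogSin η u := by
    have := log_le_log hsq (le_add_of_nonneg_right hη.1.le)
    rw [log_pow, Nat.cast_two] at this
    rw [regLogSin]
    linarith
  have hupper : regLogSin η u ≤ 1 := by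
    have := log_le_sub_one_of_pos (add_pos hsq hη.1)
    rw [regLogSin]
    linarith [sin_sq_le_one u, hη.2]
  exact abs_le.2 ⟨by linarith [neg_abs_le (log (sin u))], by linarith [abs_nonneg (log (sin u))]⟩

end RegularisedCotangent

lemma integral_integral_antisymm_mul_sub {α : Type*} [MeasurableSpace α] {μ : Measure α}
    [SFinite μ] {K : α → α → ℝ} {g : α → ℝ} (hK : ∀ x y, K y x = -K x y)
    (hint : Integrable (fun z : α × α => K z.1 z.2 * g z.1) (μ.prod μ)) :
    ∫ z, K z.1 z.2 * (g z.1 - g z.2) ∂μ.prod μ = 2 * ∫ x, (∫ y, K x y ∂μ) * g x ∂μ := by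
  have hswap : ∀ z : α × α, K z.1 z.2 * (g z.1 - g z.2) =
      K z.1 z.2 * g z.1 + K z.swap.1 z.swap.2 * g z.swap.1 := by
    intro z
    rw [Prod.fst_swap, Prod.snd_swap, hK z.1 z.2]
    ring
  calc ∫ z, K z.1 z.2 * (g z.1 - g z.2) ∂μ.prod μ
      = ∫ z, K z.1 z.2 * g z.1 + K z.swap.1 z.swap.2 * g z.swap.1 ∂μ.prod μ := by
        simp only [hswap]
    _ = ∫ z, K z.1 z.2 * g z.1 ∂μ.prod μ + ∫ z, K z.swap.1 z.swap.2 * g z.swap.1 ∂μ.prod μ :=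
        integral_add hint hint.swap
    _ = 2 * ∫ x, (∫ y, K x y ∂μ) * g x ∂μ := by
        rw [integral_prod_swap (fun z : α × α => K z.1 z.2 * g z.1), ← two_mul,
          integral_prod _ hint]
        simp only [integral_mul_const]

lemma ae_prod_mem_unit_square : ∀ᵐ z : ℝ × ℝ ∂(volume.restrict (Ioo (0 : ℝ) 1)).prod
    (volume.restrict (Ioo (0 : ℝ) 1)), z.1 ∈ Ioo (0 : ℝ) 1 ∧ z.2 ∈ Ioo (0 : ℝ) 1 := by
  rw [Measure.prod_restrict]
  exact ae_restrict_mem (measurableSet_Ioo.prod measurableSet_Ioo)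

lemma integrable_edgeWeight_mul_edgeWeight :
    Integrable (fun z : ℝ × ℝ => edgeWeight z.1 * edgeWeight z.2)
      ((volume.restrict (Ioo 0 1)).prod (volume.restrict (Ioo 0 1))) :=
  Integrable.mul_prod integrableOn_edgeWeight integrableOn_edgeWeight

/-- The principal value of `∫ cot (f x - f y) dy` over the unit interval. It is obtained by writing
`f' x * cot (f x - f y)` as the integrable `(f' x - f' y) * cot (f x - f y)` minus the logarithmic
derivative of `y ↦ sin (f x - f y)`, whose principal value is a difference of boundary terms. -/
noncomputable def cotPV (f f' : ℝ → ℝ) (x : ℝ) : ℝ :=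
  (log (sin (f x - f 0)) - log (sin (f x - f 1)) +
    ∫ y in Ioo 0 1, cot (f x - f y) * (f' x - f' y)) / f' x

namespace SteepProfile

variable {f f' g q : ℝ → ℝ} {c x η : ℝ} {P Q W : ℝ≥0}

lemma sin_sub_endpoint_ne_zero (hf : SteepProfile f c) (hx : x ∈ Ioo (0 : ℝ) 1) :
    sin (f x - f 0) ≠ 0 ∧ sin (f x - f 1) ≠ 0 :=
  ⟨hf.sin_ne_zero_of_mem_Ioo_left hx (by simp) hx.1.ne',
    hf.sin_ne_zero_of_mem_Ioo_left hx (by simp) hx.2.ne⟩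

lemma abs_log_sin_sub_endpoint_le (hf : SteepProfile f c) (hx : x ∈ Ioo (0 : ℝ) 1) :
    |log (sin (f x - f 0))| ≤ invSqrt (2 / π * c) * edgeWeight x ∧
      |log (sin (f x - f 1))| ≤ invSqrt (2 / π * c) * edgeWeight x := by
  have hx' := Ioo_subset_Icc_self hx
  have hx1 : |x - 1| = 1 - x := by rw [abs_sub_comm, abs_of_pos (sub_pos.2 hx.2)]
  have h0 := hf.abs_log_sin_le hx' (y := 0) (by simp) hx.1.ne'
    (by simpa [abs_of_pos hx.1] using hx.2)
  have h1 := hf.abs_log_sin_le hx' (y := 1) (by simp) hx.2.ne (by linarith [hx.1])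
  rw [sub_zero, abs_of_pos hx.1] at h0
  rw [hx1, edgeWeight, sub_sub_cancel, mul_comm (1 - x), ← edgeWeight] at h1
  exact ⟨h0, h1⟩

lemma deriv_le_neg {d : ℝ} (hf : SteepProfile f c) (hx : x ∈ Ioo (0 : ℝ) 1)
    (hd : HasDerivAt f d x) : d ≤ -c := by
  refine le_of_tendsto hd.tendsto_slope ?_
  filter_upwards [self_mem_nhdsWithin, nhdsWithin_le_nhds (Ioo_mem_nhds hx.1 hx.2)] with y hy hy01
  rcases lt_or_gt_of_ne (mem_compl_singleton_iff.1 hy) with hlt | hgt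
  · have := hf.mul_sub_le y (Ioo_subset_Icc_self hy01) x (Ioo_subset_Icc_self hx) hlt.le
    rw [slope_comm, slope_def_field, div_le_iff₀ (sub_pos.2 hlt)]
    linarith
  · have := hf.mul_sub_le x (Ioo_subset_Icc_self hx) y (Ioo_subset_Icc_self hy01) hgt.le
    rw [slope_def_field, div_le_iff₀ (sub_pos.2 hgt)]
    linarith

lemma deriv_ne_zero {d : ℝ} (hf : SteepProfile f c) (hx : x ∈ Ioo (0 : ℝ) 1)
    (hd : HasDerivAt f d x) : d ≠ 0 :=
  ((hf.deriv_le_neg hx hd).trans_lt (neg_neg_of_pos hf.c_pos)).ne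

lemma abs_regCot_mul_sub_le {y : ℝ} (hf : SteepProfile f c) (hq : LipschitzOnWith Q q (Icc 0 1))
    (hη : 0 < η) (hx : x ∈ Ioo (0 : ℝ) 1) (hy : y ∈ Ioo (0 : ℝ) 1) :
    |regCot η (f x - f y) * (q x - q y)| ≤
      Q * (2 / π * c)⁻¹ * (edgeWeight x * edgeWeight y) := by
  refine le_trans ?_ (hf.abs_cot_mul_sub_le hq hx hy)
  rw [abs_mul, abs_mul]
  exact mul_le_mul_of_nonneg_right (abs_regCot_le_abs_cot hη _) (abs_nonneg _)

lemma tendsto_integral_regCot_mul_sub (hf : SteepProfile f c)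
    (hq : LipschitzOnWith Q q (Icc 0 1)) (hx : x ∈ Ioo (0 : ℝ) 1) :
    Tendsto (fun η => ∫ y in Ioo 0 1, regCot η (f x - f y) * (q x - q y)) (𝓝[>] 0)
      (𝓝 (∫ y in Ioo 0 1, cot (f x - f y) * (q x - q y))) := by
  have hf_meas := aemeasurable_restrict_Ioo hf.continuousOn
  have hq_meas := aemeasurable_restrict_Ioo hq.continuousOn
  refine tendsto_integral_filter_of_dominated_convergence
    (fun y => Q * (2 / π * c)⁻¹ * (edgeWeight x * edgeWeight y)) ?_ ?_
    ((integrableOn_edgeWeight.const_mul _).const_mul _)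
    (ae_of_all _ fun y => (tendsto_regCot _).mul_const _)
  · filter_upwards [self_mem_nhdsWithin] with η hη
    have hcont := (continuous_regCot hη).measurable
    exact AEMeasurable.aestronglyMeasurable (by fun_prop)
  · filter_upwards [self_mem_nhdsWithin] with η hη
    filter_upwards [ae_restrict_mem measurableSet_Ioo] with y hy
    exact hf.abs_regCot_mul_sub_le hq hη hx hy

lemma abs_integral_regCot_mul_sub_le (hf : SteepProfile f c)
    (hq : LipschitzOnWith Q q (Icc 0 1)) (hη : 0 < η) (hx : x ∈ Ioo (0 : ℝ) 1) :
    |∫ y in Ioo 0 1, regCot η (f x - f y) * (q x - q y)| ≤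
      Q * (2 / π * c)⁻¹ * (∫ y in Ioo 0 1, edgeWeight y) * edgeWeight x := by
  rw [← Real.norm_eq_abs]
  refine (norm_integral_le_of_norm_le
    ((integrableOn_edgeWeight.const_mul (edgeWeight x)).const_mul (Q * (2 / π * c)⁻¹)) ?_).trans_eq
    ?_
  · filter_upwards [ae_restrict_mem measurableSet_Ioo] with y hy
    exact hf.abs_regCot_mul_sub_le hq hη hx hy
  · rw [integral_const_mul, integral_const_mul]
    ring

lemma integrableOn_regCot_mul (hf : SteepProfile f c) (hq : ContinuousOn q (Icc 0 1))
    (hη : 0 < η) (x : ℝ) : IntegrableOn (fun y => regCot η (f x - f y) * q y) (Ioo 0 1) := by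
  have hcont : ContinuousOn (fun y => regCot η (f x - f y) * q y) (Icc 0 1) :=
    ((continuous_regCot hη).comp_continuousOn (continuousOn_const.sub hf.continuousOn)).mul hq
  exact hcont.integrableOn_Icc.mono_set Ioo_subset_Icc_self

lemma integral_regCot_mul_deriv (hf : SteepProfile f c)
    (hf' : ∀ y ∈ Ioo (0 : ℝ) 1, HasDerivAt f (f' y) y) (hf'_cont : ContinuousOn f' (Icc 0 1))
    (hη : 0 < η) (x : ℝ) :
    ∫ y in Ioo 0 1, regCot η (f x - f y) * f' y =
      regLogSin η (f x - f 0) - regLogSin η (f x - f 1) := by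
  have hcont : ContinuousOn (fun y => -regLogSin η (f x - f y)) (Icc 0 1) := by
    have hreg : Continuous (regLogSin η) :=
      continuous_iff_continuousAt.2 fun u => (hasDerivAt_regLogSin hη u).continuousAt
    exact (hreg.comp_continuousOn (continuousOn_const.sub hf.continuousOn)).neg
  have hderiv : ∀ y ∈ Ioo (0 : ℝ) 1, HasDerivAt (fun y => -regLogSin η (f x - f y))
      (regCot η (f x - f y) * f' y) y := fun y hy => by
    simpa using ((hasDerivAt_regLogSin hη _).comp y ((hf' y hy).const_sub (f x))).fun_neg
  have hftc := intervalIntegral.integral_eq_sub_of_hasDerivAt_of_le zero_le_one hcont hderiv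
    ((intervalIntegrable_iff_integrableOn_Ioo_of_le zero_le_one).2
      (hf.integrableOn_regCot_mul hf'_cont hη x))
  rw [← integral_Ioc_eq_integral_Ioo, ← intervalIntegral.integral_of_le zero_le_one, hftc]
  ring

lemma integral_regCot_eq (hf : SteepProfile f c)
    (hf' : ∀ y ∈ Ioo (0 : ℝ) 1, HasDerivAt f (f' y) y) (hf'_cont : ContinuousOn f' (Icc 0 1))
    (hη : 0 < η) (hx : x ∈ Ioo (0 : ℝ) 1) :
    ∫ y in Ioo 0 1, regCot η (f x - f y) =
      (regLogSin η (f x - f 0) - regLogSin η (f x - f 1) +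
        ∫ y in Ioo 0 1, regCot η (f x - f y) * (f' x - f' y)) / f' x := by
  have hf'x : f' x ≠ 0 := hf.deriv_ne_zero hx (hf' x hx)
  have hint := hf.integrableOn_regCot_mul (continuousOn_const (c := f' x)) hη x
  rw [← hf.integral_regCot_mul_deriv hf' hf'_cont hη, eq_div_iff hf'x, ← integral_mul_const]
  simp only [mul_sub]
  rw [integral_sub hint (hf.integrableOn_regCot_mul hf'_cont hη x), add_sub_cancel]

lemma tendsto_integral_regCot (hf : SteepProfile f c)
    (hf' : ∀ y ∈ Ioo (0 : ℝ) 1, HasDerivAt f (f' y) y)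
    (hlip : LipschitzOnWith P f' (Icc 0 1)) (hx : x ∈ Ioo (0 : ℝ) 1) :
    Tendsto (fun η => ∫ y in Ioo 0 1, regCot η (f x - f y)) (𝓝[>] 0) (𝓝 (cotPV f f' x)) := by
  obtain ⟨hne0, hne1⟩ := hf.sin_sub_endpoint_ne_zero hx
  refine ((((tendsto_regLogSin hne0).sub (tendsto_regLogSin hne1)).add
    (hf.tendsto_integral_regCot_mul_sub hlip hx)).div_const (f' x)).congr' ?_
  filter_upwards [self_mem_nhdsWithin] with η hη
  exact (hf.integral_regCot_eq hf' hlip.continuousOn hη hx).symm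

lemma exists_abs_integral_regCot_le (hf : SteepProfile f c)
    (hf' : ∀ y ∈ Ioo (0 : ℝ) 1, HasDerivAt f (f' y) y)
    (hlip : LipschitzOnWith P f' (Icc 0 1)) :
    ∃ C, ∀ η ∈ Ioc (0 : ℝ) 1, ∀ x ∈ Ioo (0 : ℝ) 1,
      |∫ y in Ioo 0 1, regCot η (f x - f y)| ≤ C * edgeWeight x := by
  set B := invSqrt (2 / π * c)
  set R := P * (2 / π * c)⁻¹ * ∫ y in Ioo 0 1, edgeWeight y
  refine ⟨(2 * (B + 1) + R) / c, fun η hη x hx => ?_⟩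
  have hf'x : c ≤ |f' x| := le_abs.2 (.inr (le_neg_of_le_neg (hf.deriv_le_neg hx (hf' x hx))))
  obtain ⟨hne0, hne1⟩ := hf.sin_sub_endpoint_ne_zero hx
  obtain ⟨hlog0, hlog1⟩ := hf.abs_log_sin_sub_endpoint_le hx
  have hreg0 : |regLogSin η (f x - f 0)| ≤ (B + 1) * edgeWeight x := by
    linarith [abs_regLogSin_le hη hne0, one_le_edgeWeight hx]
  have hreg1 : |regLogSin η (f x - f 1)| ≤ (B + 1) * edgeWeight x := by
    linarith [abs_regLogSin_le hη hne1, one_le_edgeWeight hx]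
  have hrem := hf.abs_integral_regCot_mul_sub_le hlip hη.1 hx
  set I := ∫ y in Ioo 0 1, regCot η (f x - f y) * (f' x - f' y)
  have hnum : |regLogSin η (f x - f 0) - regLogSin η (f x - f 1) + I| ≤
      (2 * (B + 1) + R) * edgeWeight x := by
    linarith [abs_add_le (regLogSin η (f x - f 0) - regLogSin η (f x - f 1)) I,
      abs_sub (regLogSin η (f x - f 0)) (regLogSin η (f x - f 1))]
  rw [hf.integral_regCot_eq hf' hlip.continuousOn hη.1 hx, abs_div, div_mul_eq_mul_div]
  exact div_le_div₀ ((abs_nonneg _).trans hnum) hnum hf.c_pos hf'x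

lemma tendsto_integral_integral_regCot_mul (hf : SteepProfile f c)
    (hf' : ∀ y ∈ Ioo (0 : ℝ) 1, HasDerivAt f (f' y) y)
    (hlip : LipschitzOnWith P f' (Icc 0 1)) (hg : ContinuousOn g (Icc 0 1)) :
    Tendsto (fun η => ∫ x in Ioo 0 1, (∫ y in Ioo 0 1, regCot η (f x - f y)) * g x) (𝓝[>] 0)
      (𝓝 (∫ x in Ioo 0 1, cotPV f f' x * g x)) := by
  have hf_meas := aemeasurable_restrict_Ioo hf.continuousOn
  have hg_meas := aemeasurable_restrict_Ioo hg
  have hf_fst := hf_meas.comp_fst (ν := volume.restrict (Ioo (0 : ℝ) 1))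
  have hf_snd := hf_meas.comp_snd (μ := volume.restrict (Ioo (0 : ℝ) 1))
  obtain ⟨C, hC⟩ := hf.exists_abs_integral_regCot_le hf' hlip
  obtain ⟨G, hG⟩ := isCompact_Icc.exists_bound_of_continuousOn hg
  refine tendsto_integral_filter_of_dominated_convergence (fun x => C * edgeWeight x * G) ?_ ?_
    ((integrableOn_edgeWeight.const_mul C).mul_const G) ?_
  · filter_upwards [self_mem_nhdsWithin] with η hη
    have hreg := (continuous_regCot hη).measurable
    refine AEStronglyMeasurable.mul ?_ hg_meas.aestronglyMeasurable
    exact AEStronglyMeasurable.integral_prod_right' (f := fun z => regCot η (f z.1 - f z.2))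
      (hreg.comp_aemeasurable (hf_fst.sub hf_snd)).aestronglyMeasurable
  · filter_upwards [Ioc_mem_nhdsGT one_pos] with η hη
    filter_upwards [ae_restrict_mem measurableSet_Ioo] with x hx
    rw [norm_mul]
    exact mul_le_mul (hC η hη x hx) (hG x (Ioo_subset_Icc_self hx)) (norm_nonneg _)
      ((abs_nonneg _).trans (hC η hη x hx))
  · filter_upwards [ae_restrict_mem measurableSet_Ioo] with x hx
    exact (hf.tendsto_integral_regCot hf' hlip hx).mul_const _

lemma integrable_cot_mul_sub (hf : SteepProfile f c) (hg : LipschitzOnWith W g (Icc 0 1)) :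
    Integrable (fun z : ℝ × ℝ => cot (f z.1 - f z.2) * (g z.1 - g z.2))
      ((volume.restrict (Ioo 0 1)).prod (volume.restrict (Ioo 0 1))) := by
  have hf_meas := aemeasurable_restrict_Ioo hf.continuousOn
  have hg_meas := aemeasurable_restrict_Ioo hg.continuousOn
  have hf_sub := hf_meas.comp_fst.sub hf_meas.comp_snd
  have hg_sub := hg_meas.comp_fst.sub hg_meas.comp_snd
  refine (integrable_edgeWeight_mul_edgeWeight.const_mul (W * (2 / π * c)⁻¹)).mono' ?_ ?_
  · simp only [cot_eq_cos_div_sin]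
    exact ((hf_sub.cos.div hf_sub.sin).mul hg_sub).aestronglyMeasurable
  · filter_upwards [ae_prod_mem_unit_square] with z hz
    exact hf.abs_cot_mul_sub_le hg hz.1 hz.2

lemma tendsto_integral_prod_regCot_mul_sub (hf : SteepProfile f c)
    (hg : LipschitzOnWith W g (Icc 0 1)) :
    Tendsto (fun η => ∫ z : ℝ × ℝ, regCot η (f z.1 - f z.2) * (g z.1 - g z.2)
        ∂(volume.restrict (Ioo 0 1)).prod (volume.restrict (Ioo 0 1))) (𝓝[>] 0)
      (𝓝 (∫ z : ℝ × ℝ, cot (f z.1 - f z.2) * (g z.1 - g z.2)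
        ∂(volume.restrict (Ioo 0 1)).prod (volume.restrict (Ioo 0 1)))) := by
  have hf_meas := aemeasurable_restrict_Ioo hf.continuousOn
  have hg_meas := aemeasurable_restrict_Ioo hg.continuousOn
  have hf_sub := hf_meas.comp_fst.sub hf_meas.comp_snd
  have hg_sub := hg_meas.comp_fst.sub hg_meas.comp_snd
  refine tendsto_integral_filter_of_dominated_convergence _ ?_ ?_
    (integrable_edgeWeight_mul_edgeWeight.const_mul (W * (2 / π * c)⁻¹))
    (ae_of_all _ fun z => (tendsto_regCot _).mul_const _)
  · filter_upwards [self_mem_nhdsWithin] with η hη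
    exact (((continuous_regCot hη).measurable.comp_aemeasurable hf_sub).mul
      hg_sub).aestronglyMeasurable
  · filter_upwards [self_mem_nhdsWithin] with η hη
    filter_upwards [ae_prod_mem_unit_square] with z hz
    exact hf.abs_regCot_mul_sub_le hg hη hz.1 hz.2

lemma integrable_regCot_mul (hf : SteepProfile f c) (hg : ContinuousOn g (Icc 0 1))
    (hη : 0 < η) :
    Integrable (fun z : ℝ × ℝ => regCot η (f z.1 - f z.2) * g z.1)
      ((volume.restrict (Ioo 0 1)).prod (volume.restrict (Ioo 0 1))) := by
  have hf_meas := aemeasurable_restrict_Ioo hf.continuousOn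
  have hg_int : IntegrableOn g (Ioo 0 1) :=
    hg.integrableOn_Icc.mono_set Ioo_subset_Icc_self
  exact (hg_int.comp_fst _).bdd_mul
    ((continuous_regCot hη).measurable.comp_aemeasurable
      (hf_meas.comp_fst.sub hf_meas.comp_snd)).aestronglyMeasurable
    (ae_of_all _ fun z => abs_regCot_le_inv hη _)

theorem integral_integral_cot_mul_sub (hf : SteepProfile f c)
    (hf' : ∀ y ∈ Ioo (0 : ℝ) 1, HasDerivAt f (f' y) y)
    (hlip : LipschitzOnWith P f' (Icc 0 1)) (hg : LipschitzOnWith W g (Icc 0 1)) :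
    ∫ y in Ioo 0 1, ∫ x in Ioo 0 1, cot (f x - f y) * (g x - g y) =
      2 * ∫ x in Ioo 0 1, cotPV f f' x * g x := by
  rw [← integral_prod_symm _ (hf.integrable_cot_mul_sub hg)]
  refine tendsto_nhds_unique (hf.tendsto_integral_prod_regCot_mul_sub hg)
    (((hf.tendsto_integral_integral_regCot_mul hf' hlip hg.continuousOn).const_mul 2).congr' ?_)
  filter_upwards [self_mem_nhdsWithin] with η hη
  refine (integral_integral_antisymm_mul_sub (K := fun x y => regCot η (f x - f y)) ?_
    (hf.integrable_regCot_mul hg.continuousOn hη)).symm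
  intro x y
  rw [← neg_sub, regCot_neg]

end SteepProfile

section CauchyPrincipalValue

variable {F G s s' : ℝ → ℝ} {a b x l m : ℝ}

/-- `l` is the Cauchy principal value of `∫ y in a..b, F y` with respect to the singular point
`x`. -/
def HasCauchyPV (F : ℝ → ℝ) (a b x l : ℝ) : Prop :=
  Tendsto (fun δ : ℝ => (∫ y in a..(x - δ), F y) + ∫ y in (x + δ)..b, F y) (𝓝[>] 0) (𝓝 l)

lemma HasCauchyPV.const_mul (hF : HasCauchyPV F a b x l) (k : ℝ) :
    HasCauchyPV (fun y => k * F y) a b x (k * l) := by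
  simpa only [HasCauchyPV, intervalIntegral.integral_const_mul, ← mul_add] using
    Tendsto.const_mul k hF

lemma eventually_intervalIntegrable_of_continuousOn_diff (hx : x ∈ Ioo a b)
    (hF : ContinuousOn F (Icc a b \ {x})) :
    ∀ᶠ δ in 𝓝[>] 0, IntervalIntegrable F volume a (x - δ) ∧
      IntervalIntegrable F volume (x + δ) b := by
  filter_upwards [Ioo_mem_nhdsGT (sub_pos.2 hx.1), Ioo_mem_nhdsGT (sub_pos.2 hx.2)]
    with δ hδa hδb
  have hδ := hδa.1
  constructor
  · refine ContinuousOn.intervalIntegrable_of_Icc (by linarith [hδa.2]) (hF.mono fun y hy => ?_)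
    exact ⟨⟨hy.1, by linarith [hy.2, hx.2]⟩, (by linarith [hy.2] : y < x).ne⟩
  · refine ContinuousOn.intervalIntegrable_of_Icc (by linarith [hδb.2]) (hF.mono fun y hy => ?_)
    exact ⟨⟨by linarith [hy.1, hx.1], hy.2⟩, (by linarith [hy.1] : x < y).ne'⟩

lemma HasCauchyPV.add (hx : x ∈ Ioo a b) (hF : HasCauchyPV F a b x l)
    (hG : HasCauchyPV G a b x m) (hF_cont : ContinuousOn F (Icc a b \ {x}))
    (hG_cont : ContinuousOn G (Icc a b \ {x})) :
    HasCauchyPV (fun y => F y + G y) a b x (l + m) := by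
  refine (Tendsto.add hF hG).congr' ?_
  filter_upwards [eventually_intervalIntegrable_of_continuousOn_diff hx hF_cont,
    eventually_intervalIntegrable_of_continuousOn_diff hx hG_cont] with δ hFδ hGδ
  rw [intervalIntegral.integral_add hFδ.1 hGδ.1, intervalIntegral.integral_add hFδ.2 hGδ.2]
  ring

lemma hasCauchyPV_integral (hx : x ∈ Ioo a b) (hF : IntervalIntegrable F volume a b) :
    HasCauchyPV F a b x (∫ y in a..b, F y) := by
  have hab := (hx.1.trans hx.2).le
  have hprim : ContinuousAt (fun t => ∫ y in a..t, F y) x :=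
    (intervalIntegral.continuousOn_primitive_interval' hF left_mem_uIcc).continuousAt
      (by rw [uIcc_of_le hab]; exact Icc_mem_nhds hx.1 hx.2)
  have hleft : Tendsto (fun δ => x - δ) (𝓝[>] 0) (𝓝 x) :=
    (Continuous.tendsto' (by fun_prop) _ _ (by simp)).mono_left nhdsWithin_le_nhds
  have hright : Tendsto (fun δ => x + δ) (𝓝[>] 0) (𝓝 x) :=
    (Continuous.tendsto' (by fun_prop) _ _ (by simp)).mono_left nhdsWithin_le_nhds
  have hlim := (hprim.tendsto.comp hleft).add
    ((hprim.tendsto.comp hright).const_sub (∫ y in a..b, F y))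
  rw [add_sub_cancel] at hlim
  refine hlim.congr' ?_
  filter_upwards [Ioo_mem_nhdsGT (sub_pos.2 hx.2)] with δ hδ
  have hmem : x + δ ∈ uIcc a b := by
    rw [uIcc_of_le hab]
    exact ⟨by linarith [hδ.1, hx.1], by linarith [hδ.2]⟩
  rw [Function.comp_apply, Function.comp_apply, intervalIntegral.integral_interval_sub_left hF
    (hF.mono_set (uIcc_subset_uIcc left_mem_uIcc hmem))]

lemma tendsto_log_sub_log_of_hasDerivAt {d : ℝ} (hs : HasDerivAt s d x) (hzero : s x = 0)
    (hd : d ≠ 0) : Tendsto (fun δ => log (s (x - δ)) - log (s (x + δ))) (𝓝[>] 0) (𝓝 0) := by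
  have hpos : Tendsto (fun δ : ℝ => δ) (𝓝[>] 0) (𝓝[≠] 0) :=
    tendsto_id.mono_right (nhdsGT_le_nhdsNE 0)
  have hneg : Tendsto (fun δ : ℝ => -δ) (𝓝[>] 0) (𝓝[≠] 0) := by
    refine tendsto_nhdsWithin_iff.2 ⟨?_, ?_⟩
    · exact (Continuous.tendsto' (by fun_prop) _ _ (by simp)).mono_left nhdsWithin_le_nhds
    · filter_upwards [self_mem_nhdsWithin] with δ hδ using neg_ne_zero.2 (ne_of_gt hδ)
  have hslope : Tendsto (fun t => t⁻¹ * s (x + t)) (𝓝[≠] 0) (𝓝 d) := by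
    simpa only [hzero, sub_zero, smul_eq_mul] using hs.tendsto_slope_zero
  have hleft := hslope.comp hneg
  have hright := hslope.comp hpos
  have hlim := (hleft.log hd).sub (hright.log hd)
  rw [sub_self] at hlim
  refine hlim.congr' ?_
  filter_upwards [hleft.eventually_ne hd, hright.eventually_ne hd] with δ hleft_ne hright_ne
  rw [Function.comp_apply, mul_ne_zero_iff] at hleft_ne hright_ne
  simp only [Function.comp_apply]
  rw [log_mul hleft_ne.1 hleft_ne.2, log_mul hright_ne.1 hright_ne.2, inv_neg, log_neg_eq_log,
    ← sub_eq_add_neg]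
  ring

lemma hasCauchyPV_logDeriv (hx : x ∈ Ioo a b) (hs_cont : ContinuousOn s (Icc a b))
    (hs : ∀ y ∈ Ioo a b, HasDerivAt s (s' y) y) (hs'_cont : ContinuousOn s' (Icc a b))
    (hzero : s x = 0) (hne : ∀ y ∈ Icc a b, y ≠ x → s y ≠ 0) (hs'x : s' x ≠ 0) :
    HasCauchyPV (fun y => s' y / s y) a b x (log (s b) - log (s a)) := by
  have hcont : ContinuousOn (fun y => s' y / s y) (Icc a b \ {x}) :=
    (hs'_cont.mono sdiff_subset).div (hs_cont.mono sdiff_subset) fun y hy => hne y hy.1 hy.2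
  have hftc {p q : ℝ} (hpq : p ≤ q) (hsub : Icc p q ⊆ Icc a b \ {x})
      (hint : IntervalIntegrable (fun y => s' y / s y) volume p q) :
      ∫ y in p..q, s' y / s y = log (s q) - log (s p) := by
    refine intervalIntegral.integral_eq_sub_of_hasDerivAt_of_le hpq
      ((hs_cont.mono (hsub.trans sdiff_subset)).log fun y hy => hne y (hsub hy).1 (hsub hy).2)
      (fun y hy => ?_) hint
    have hyab : y ∈ Ioo a b :=
      ⟨(hsub ⟨le_rfl, hpq⟩).1.1.trans_lt hy.1, hy.2.trans_le (hsub ⟨hpq, le_rfl⟩).1.2⟩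
    have hy' := hsub (Ioo_subset_Icc_self hy)
    exact (hs y hyab).log (hne y hy'.1 hy'.2)
  have hlim := (tendsto_log_sub_log_of_hasDerivAt (hs x hx) hzero hs'x).const_add
    (log (s b) - log (s a))
  rw [add_zero] at hlim
  refine hlim.congr' ?_
  filter_upwards [Ioo_mem_nhdsGT (sub_pos.2 hx.1), Ioo_mem_nhdsGT (sub_pos.2 hx.2),
    eventually_intervalIntegrable_of_continuousOn_diff hx hcont] with δ hδa hδb hint
  have hδ := hδa.1
  rw [hftc (by linarith [hδa.2]) (fun y hy => ?_) hint.1,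
    hftc (by linarith [hδb.2]) (fun y hy => ?_) hint.2]
  · ring
  · exact ⟨⟨by linarith [hy.1, hx.1], hy.2⟩, (by linarith [hy.1] : x < y).ne'⟩
  · exact ⟨⟨hy.1, by linarith [hy.2, hx.2]⟩, (by linarith [hy.2] : y < x).ne⟩

end CauchyPrincipalValue

namespace SteepProfile

variable {f f' q : ℝ → ℝ} {c x : ℝ} {P Q : ℝ≥0}

lemma continuousOn_cot (hf : SteepProfile f c) (hx : x ∈ Ioo (0 : ℝ) 1) :
    ContinuousOn (fun y => cot (f x - f y)) (Icc 0 1 \ {x}) := by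
  have hsub : ContinuousOn (fun y => f x - f y) (Icc 0 1 \ {x}) :=
    (continuousOn_const.sub hf.continuousOn).mono sdiff_subset
  simp only [cot_eq_cos_div_sin]
  exact (continuous_cos.comp_continuousOn hsub).div (continuous_sin.comp_continuousOn hsub)
    fun y hy => hf.sin_ne_zero_of_mem_Ioo_left hx hy.1 (Ne.symm hy.2)

lemma intervalIntegrable_cot_mul_sub (hf : SteepProfile f c)
    (hq : LipschitzOnWith Q q (Icc 0 1)) (hx : x ∈ Ioo (0 : ℝ) 1) :
    IntervalIntegrable (fun y => cot (f x - f y) * (q x - q y)) volume 0 1 := by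
  have hf_meas := (aemeasurable_restrict_Ioo hf.continuousOn).const_sub (f x)
  have hq_meas := (aemeasurable_restrict_Ioo hq.continuousOn).const_sub (q x)
  rw [intervalIntegrable_iff_integrableOn_Ioo_of_le zero_le_one]
  refine ((integrableOn_edgeWeight.const_mul (edgeWeight x)).const_mul
    (Q * (2 / π * c)⁻¹)).mono' ?_ ?_
  · simp only [cot_eq_cos_div_sin]
    exact ((hf_meas.cos.div hf_meas.sin).mul hq_meas).aestronglyMeasurable
  · filter_upwards [ae_restrict_mem measurableSet_Ioo] with y hy
    exact hf.abs_cot_mul_sub_le hq hx hy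

lemma hasCauchyPV_cot_mul_deriv (hf : SteepProfile f c)
    (hf' : ∀ y ∈ Ioo (0 : ℝ) 1, HasDerivAt f (f' y) y) (hf'_cont : ContinuousOn f' (Icc 0 1))
    (hx : x ∈ Ioo (0 : ℝ) 1) :
    HasCauchyPV (fun y => cot (f x - f y) * f' y) 0 1 x
      (log (sin (f x - f 0)) - log (sin (f x - f 1))) := by
  have hsub : ContinuousOn (fun y => f x - f y) (Icc 0 1) :=
    continuousOn_const.sub hf.continuousOn
  have hlogDeriv := hasCauchyPV_logDeriv (s := fun y => sin (f x - f y))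
    (s' := fun y => cos (f x - f y) * -f' y) hx (continuous_sin.comp_continuousOn hsub)
    (fun y hy => ((hf' y hy).const_sub (f x)).sin)
    ((continuous_cos.comp_continuousOn hsub).mul hf'_cont.neg) (by simp)
    (fun y hy hyx => hf.sin_ne_zero_of_mem_Ioo_left hx hy hyx.symm)
    (by simpa using hf.deriv_ne_zero hx (hf' x hx))
  convert hlogDeriv.const_mul (-1) using 1
  · ext y
    rw [cot_eq_cos_div_sin]
    ring
  · ring

theorem hasCauchyPV_cot (hf : SteepProfile f c)
    (hf' : ∀ y ∈ Ioo (0 : ℝ) 1, HasDerivAt f (f' y) y)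
    (hlip : LipschitzOnWith P f' (Icc 0 1)) (hx : x ∈ Ioo (0 : ℝ) 1) :
    HasCauchyPV (fun y => cot (f x - f y)) 0 1 x (cotPV f f' x) := by
  have hf'x : f' x ≠ 0 := hf.deriv_ne_zero hx (hf' x hx)
  have hcot := hf.continuousOn_cot hx
  have hf'_cont : ContinuousOn f' (Icc 0 1 \ {x}) := hlip.continuousOn.mono sdiff_subset
  have hregular := hasCauchyPV_integral hx (hf.intervalIntegrable_cot_mul_sub hlip hx)
  have hsum := hregular.add hx (hf.hasCauchyPV_cot_mul_deriv hf' hlip.continuousOn hx)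
    (hcot.mul (continuousOn_const.sub hf'_cont)) (hcot.mul hf'_cont)
  convert hsum.const_mul (f' x)⁻¹ using 1
  · ext y
    field_simp
    ring
  · rw [cotPV, intervalIntegral.integral_of_le zero_le_one, integral_Ioc_eq_integral_Ioo]
    ring

end SteepProfile
lemma steepProfile_const_mul {φ φ' : ℝ → ℝ} {c k : ℝ} (hc : 0 < c) (hk : 0 < k)
    (hφ_cont : ContinuousOn φ (Icc 0 1)) (hφ_deriv : ∀ t ∈ Ioo (0 : ℝ) 1, HasDerivAt φ (φ' t) t)
    (hφ' : ∀ t ∈ Ioo (0 : ℝ) 1, φ' t ≤ -c) (hdrop : k * (φ 0 - φ 1) ≤ π) :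
    SteepProfile (fun t => k * φ t) (k * c) where
  c_pos := mul_pos hk hc
  continuousOn := hφ_cont.const_mul k
  mul_sub_le x hx y hy hxy := by
    rw [← interior_Icc] at hφ_deriv hφ'
    have hmean := (convex_Icc (0 : ℝ) 1).image_sub_le_mul_sub_of_deriv_le hφ_cont
      (fun t ht => (hφ_deriv t ht).differentiableAt.differentiableWithinAt)
      (fun t ht => (hφ_deriv t ht).deriv.trans_le (hφ' t ht)) x hx y hy hxy
    rw [← mul_sub, mul_assoc]
    gcongr
    linarith
  drop_le := by rwa [← mul_sub]

lemma E0phi_eq_integral_integral_log_sin (L : ℝ) (g : ℝ → ℝ) :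
    E0phi L g = ∫ y in Ioo 0 1, ∫ x in Ioo 0 1, log (sin (π / L * g x - π / L * g y)) := by
  simp only [E0phi, intervalIntegral.integral_of_le zero_le_one, integral_Ioc_eq_integral_Ioo,
    log_abs, ← mul_sub, mul_div_right_comm]

theorem stmt_3_general (L c : ℝ) (hL : 0 < L) (hc : 0 < c) (φ φ' φtilde : ℝ → ℝ) {P W : ℝ≥0}
    (hφ_cont : ContinuousOn φ (Icc 0 1)) (hφ_deriv : ∀ α ∈ Ioo (0 : ℝ) 1, HasDerivAt φ (φ' α) α)
    (hφ'_lip : LipschitzOnWith P φ' (Icc 0 1)) (hφ' : ∀ α ∈ Ioo (0 : ℝ) 1, φ' α ≤ -c)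
    (hrange : φ 0 - φ 1 ≤ L) (hφt : LipschitzOnWith W φtilde (Icc 0 1)) :
    ∃ pv : ℝ → ℝ,
      (∀ α ∈ Ioo (0 : ℝ) 1,
        HasCauchyPV (fun β => 2 * π / L * cot (π * (φ α - φ β) / L)) 0 1 α (pv α)) ∧
      HasDerivAt (fun ε => E0phi L (fun α => φ α + ε * φtilde α))
        (∫ α in (0 : ℝ)..1, pv α * φtilde α) 0 := by
  have hk : 0 < π / L := by positivity
  have hf : SteepProfile (fun t => π / L * φ t) (π / L * c) :=
    steepProfile_const_mul hc hk hφ_cont hφ_deriv hφ'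
      (by rw [div_mul_eq_mul_div, div_le_iff₀ hL]; gcongr)
  have hf' (t) (ht : t ∈ Ioo (0 : ℝ) 1) := (hφ_deriv t ht).const_mul (π / L)
  have hf'_lip := (lipschitzWith_smul (π / L)).comp_lipschitzOnWith hφ'_lip
  have hg := (lipschitzWith_smul (π / L)).comp_lipschitzOnWith hφt
  refine ⟨fun α => 2 * π / L * cotPV (fun t => π / L * φ t) (fun t => π / L * φ' t) α,
    fun α hα => ?_, ?_⟩
  · convert (hf.hasCauchyPV_cot hf' hf'_lip hα).const_mul (2 * π / L) using 4
    ring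
  · convert hf.hasDerivAt_integral_integral_log_sin hg using 1
    · ext ε
      simp only [E0phi_eq_integral_integral_log_sin, Function.comp_apply, smul_eq_mul, mul_add,
        mul_left_comm]
    · rw [hf.integral_integral_cot_mul_sub hf' hf'_lip hg,
        intervalIntegral.integral_of_le zero_le_one, integral_Ioc_eq_integral_Ioo,
        ← integral_const_mul]
      congr with α
      simp only [Function.comp_apply, smul_eq_mul]
      ring

end

/-- For `φ ∈ C²([0,1])` with `φ′ ≤ −c < 0` and `φ(0) − φ(1) ≤ L`, and
`φ̃ ∈ C¹([0,1])`, the map `ε ↦ E⁰_φ(φ + ε φ̃)` is differentiable at `ε = 0`, the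
principal-value limits exist for every `α ∈ (0,1)`, and the derivative is
`∫₀¹ (PV-limit)(α) · φ̃(α) dα`. -/
theorem stmt_3 (L c : ℝ) (hL : 0 < L) (hc : 0 < c) (φ φtilde : ℝ → ℝ)
    (hφ : ContDiffOn ℝ 2 φ (Set.Icc 0 1))
    (hφ' : ∀ α ∈ Set.Icc (0:ℝ) 1, derivWithin φ (Set.Icc 0 1) α ≤ -c)
    (hrange : φ 0 - φ 1 ≤ L)
    (hφt : ContDiffOn ℝ 1 φtilde (Set.Icc 0 1)) :
    ∃ pv : ℝ → ℝ,
      (∀ α ∈ Set.Ioo (0:ℝ) 1,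
        Tendsto (fun δ : ℝ =>
            (∫ β in (0:ℝ)..(α - δ), (2 * π / L) * Real.cot (π * (φ α - φ β) / L))
            + ∫ β in (α + δ)..1, (2 * π / L) * Real.cot (π * (φ α - φ β) / L))
          (𝓝[>] (0:ℝ)) (𝓝 (pv α))) ∧
      HasDerivAt (fun ε : ℝ => E0phi L (fun α => φ α + ε * φtilde α))
        (∫ α in (0:ℝ)..1, pv α * φtilde α) 0 := by
  have hunique := uniqueDiffOn_Icc (zero_lt_one (α := ℝ))
  have hd : ContDiffOn ℝ 1 (derivWithin φ (Set.Icc 0 1)) (Set.Icc 0 1) :=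
    hφ.derivWithin hunique (by norm_num)
  obtain ⟨P, hP⟩ := hd.exists_lipschitzOnWith one_ne_zero (convex_Icc 0 1) isCompact_Icc
  obtain ⟨W, hW⟩ := hφt.exists_lipschitzOnWith one_ne_zero (convex_Icc 0 1) isCompact_Icc
  exact stmt_3_general L c hL hc φ _ φtilde hφ.continuousOn
    (fun α hα => (hφ.differentiableOn two_ne_zero α
      (Set.Ioo_subset_Icc_self hα)).hasDerivWithinAt.hasDerivAt (Icc_mem_nhds hα.1 hα.2))
    hP (fun α hα => hφ' α (Set.Ioo_subset_Icc_self hα)) hrange hW
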